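/- Fix p > 1, dimension d ≥ (4p−1)/(p−1), and ε > 0. Then there exists a nested sequence B ⊇ K_1 ⊇ K_2 ⊇ ⋯ of centrally symmetric compact convex sets in ℝ^d such that (I) the Hausdorff distance D_∞(B, K_i) ≤ ε for all i, (II) Σ_{i=1}^∞ D_p(K_i, K_{i+1}) = ∞, and (III) the sequence D_p(K_i, K_{i+1}) is nonincreasing in i. -/

import Mathlib

open MeasureTheory Real Set
open scoped RealInnerProductSpace

noncomputable section

/-- The normalized uniform (surface) measure on the unit sphere in `ℝ^d`. -/
def sphereMeasure (d : ℕ) : Measure (Metric.sphere (0 : EuclideanSpace ℝ (Fin d)) 1) :=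
  ((volume : Measure (EuclideanSpace ℝ (Fin d))).toSphere Set.univ)⁻¹ •
    (volume : Measure (EuclideanSpace ℝ (Fin d))).toSphere

/-- The support function of a set `K ⊆ ℝ^d`. -/
def suppFn {d : ℕ} (K : Set (EuclideanSpace ℝ (Fin d))) (y : EuclideanSpace ℝ (Fin d)) : ℝ :=
  sSup ((fun x => ⟪x, y⟫) '' K)

/-- The `L_p` analog of the Hausdorff distance: the `L_p`-distance of support functions
with respect to the normalized uniform measure on the sphere. -/
def Dp {d : ℕ} (p : ℝ) (K K' : Set (EuclideanSpace ℝ (Fin d))) : ℝ :=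
  (∫ y : Metric.sphere (0 : EuclideanSpace ℝ (Fin d)) 1,
      |suppFn K (y : EuclideanSpace ℝ (Fin d)) - suppFn K' (y : EuclideanSpace ℝ (Fin d))| ^ p
    ∂ sphereMeasure d) ^ (1 / p)

/-- The open spherical cap of angular radius `θ` around `v`, as a subset of `ℝ^d`. -/
def cap {d : ℕ} (v : EuclideanSpace ℝ (Fin d)) (θ : ℝ) : Set (EuclideanSpace ℝ (Fin d)) :=
  {x | ‖x‖ = 1 ∧ Real.arccos ⟪x, v⟫ < θ}

/-- The open spherical cap, as a subset of the unit sphere (for measuring). -/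
def capS {d : ℕ} (v : EuclideanSpace ℝ (Fin d)) (θ : ℝ) :
    Set (Metric.sphere (0 : EuclideanSpace ℝ (Fin d)) 1) :=
  {x | Real.arccos ⟪(x : EuclideanSpace ℝ (Fin d)), v⟫ < θ}

/-- The Steiner point of a set `K ⊆ ℝ^d`. -/
def steiner {d : ℕ} (K : Set (EuclideanSpace ℝ (Fin d))) : EuclideanSpace ℝ (Fin d) :=
  (d : ℝ) • ∫ y : Metric.sphere (0 : EuclideanSpace ℝ (Fin d)) 1,
      suppFn K (y : EuclideanSpace ℝ (Fin d)) • (y : EuclideanSpace ℝ (Fin d)) ∂ sphereMeasure d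

/-!
Cut infinitely many pairs of opposite caps off the unit ball, one pair at each step. If the closed
caps are pairwise disjoint, each cut lowers the support function only at directions inside its own
caps and by an amount that the other cuts do not affect. So the `D_p`-length of a step depends only
on the radius of its caps, and it decreases with that radius.

A cap of radius `r` lowers the support function by about `r ^ 2` on a set of measure at least
`c * r ^ d`, so its step has length at least `c' * r ^ (2 + d / p)`. Disjoint caps of radii `r i`
can be placed greedily as soon as `∑ r i ^ (d - 1)` is small. As `2 + d / p < d - 1`, the radii can
be chosen with `∑ r i ^ (d - 1)` as small as desired and `∑ r i ^ (2 + d / p) = ∞`.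
-/

section Slab

open Function

variable {E : Type*} [NormedAddCommGroup E] [InnerProductSpace ℝ E]

/-- The closed symmetric slab of half-width `t` orthogonal to `v`. For a unit vector `v`,
intersecting the unit ball with it cuts off two opposite caps. -/
def slab (v : E) (t : ℝ) : Set E := {x | |⟪x, v⟫| ≤ t}

/-- The pair of opposite closed solid caps at height `t` over `v` and `-v`. They overlap
`slab v t` in their flat faces, so disjointness also concerns the faces. -/
def doubleCap (v : E) (t : ℝ) : Set E := {x | ‖x‖ ≤ 1 ∧ t ≤ |⟪x, v⟫|}

/-- The closed unit ball after the first `n` pairs of caps have been cut off. -/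
def truncatedBall (v : ℕ → E) (t : ℕ → ℝ) (n : ℕ) : Set E :=
  Metric.closedBall 0 1 ∩ ⋂ i < n, slab (v i) (t i)

lemma isClosed_slab (v : E) (t : ℝ) : IsClosed (slab v t) :=
  isClosed_le (by fun_prop) continuous_const

lemma convex_slab (v : E) (t : ℝ) : Convex ℝ (slab v t) := by
  have : slab v t = (innerₛₗ ℝ).flip v ⁻¹' Icc (-t) t := by
    ext x
    simp [slab, abs_le]
  rw [this]
  exact (convex_Icc _ _).linear_preimage _

lemma neg_slab (v : E) (t : ℝ) : -slab v t = slab v t := by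
  ext x
  simp [slab, inner_neg_left]

lemma slab_subset_slab (v : E) {s t : ℝ} (hst : s ≤ t) : slab v s ⊆ slab v t :=
  fun _ hx => le_trans hx hst

lemma closedBall_subset_slab {v : E} (hv : ‖v‖ = 1) (t : ℝ) :
    Metric.closedBall 0 t ⊆ slab v t := by
  intro x hx
  have := abs_real_inner_le_norm x v
  rw [hv, mul_one] at this
  exact this.trans (mem_closedBall_zero_iff.1 hx)

lemma image_slab (L : E ≃ₗᵢ[ℝ] E) (v : E) (t : ℝ) : L '' slab v t = slab (L v) t := by
  ext x
  rw [L.image_eq_preimage_symm, mem_preimage]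
  simp only [slab, mem_ofPred_eq]
  rw [← L.inner_map_map, L.apply_symm_apply]

lemma truncatedBall_subset_closedBall (v : ℕ → E) (t : ℕ → ℝ) (n : ℕ) :
    truncatedBall v t n ⊆ Metric.closedBall 0 1 :=
  inter_subset_left

lemma truncatedBall_subset_slab (v : ℕ → E) (t : ℕ → ℝ) {i n : ℕ} (hi : i < n) :
    truncatedBall v t n ⊆ slab (v i) (t i) :=
  inter_subset_right.trans (iInter₂_subset i hi)

lemma truncatedBall_succ_subset (v : ℕ → E) (t : ℕ → ℝ) (n : ℕ) :
    truncatedBall v t (n + 1) ⊆ truncatedBall v t n :=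
  inter_subset_inter_right _ <| iInter₂_mono' fun i hi => ⟨i, hi.trans n.lt_succ_self, le_rfl⟩

lemma isCompact_truncatedBall [ProperSpace E] (v : ℕ → E) (t : ℕ → ℝ) (n : ℕ) :
    IsCompact (truncatedBall v t n) :=
  (isCompact_closedBall _ _).inter_right <|
    isClosed_iInter fun i => isClosed_iInter fun _ => isClosed_slab (v i) (t i)

lemma convex_truncatedBall (v : ℕ → E) (t : ℕ → ℝ) (n : ℕ) : Convex ℝ (truncatedBall v t n) :=
  (convex_closedBall _ _).inter <| convex_iInter₂ fun i _ => convex_slab (v i) (t i)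

lemma neg_truncatedBall (v : ℕ → E) (t : ℕ → ℝ) (n : ℕ) :
    -truncatedBall v t n = truncatedBall v t n := by
  simp [truncatedBall, inter_neg, iInter_neg, neg_slab]

lemma closedBall_subset_truncatedBall {v : ℕ → E} {t : ℕ → ℝ} {s : ℝ} (hv : ∀ i, ‖v i‖ = 1)
    (hs : s ≤ 1) (hst : ∀ i, s ≤ t i) (n : ℕ) : Metric.closedBall 0 s ⊆ truncatedBall v t n :=
  subset_inter (Metric.closedBall_subset_closedBall hs) <| subset_iInter₂ fun i _ =>
    (closedBall_subset_slab (hv i) s).trans (slab_subset_slab (v i) (hst i))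

lemma truncatedBall_nonempty {v : ℕ → E} {t : ℕ → ℝ} (ht : ∀ i, 0 ≤ t i) (n : ℕ) :
    (truncatedBall v t n).Nonempty :=
  ⟨0, by simpa [truncatedBall, slab] using fun i _ => ht i⟩

lemma closedBall_inter_slab_nonempty (v : E) {t : ℝ} (ht : 0 ≤ t) :
    (Metric.closedBall 0 1 ∩ slab v t).Nonempty :=
  ⟨0, by simpa [slab] using ht⟩

lemma mem_slab_of_mem_doubleCap {ι : Type*} {v : ι → E} {t : ι → ℝ}
    (hdisj : Pairwise (Disjoint on fun i => doubleCap (v i) (t i))) {i j : ι} (hij : i ≠ j) {x : E}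
    (hx : x ∈ doubleCap (v i) (t i)) : x ∈ slab (v j) (t j) := by
  by_contra hxj
  exact disjoint_left.1 (hdisj hij) hx ⟨hx.1, (not_le.1 hxj).le⟩

lemma doubleCap_subset_union_closedBall {v : E} (hv : ‖v‖ = 1) {r : ℝ} (hr : 0 ≤ r) :
    doubleCap v (1 - r ^ 2 / 2) ⊆ Metric.closedBall v r ∪ Metric.closedBall (-v) r := by
  rintro x ⟨hx, hxv⟩
  have hx2 : ‖x‖ ^ 2 ≤ 1 := pow_le_one₀ (norm_nonneg x) hx
  simp only [mem_union, mem_closedBall_iff_norm, sub_neg_eq_add]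
  refine (le_abs.1 hxv).imp (fun h => ?_) (fun h => ?_) <;> apply le_of_sq_le_sq _ hr
  · rw [norm_sub_sq_real, hv]
    linarith
  · rw [norm_add_sq_real, hv]
    linarith

lemma disjoint_doubleCap {v w : E} (hv : ‖v‖ = 1) (hw : ‖w‖ = 1) {r s : ℝ} (hr : 0 ≤ r)
    (hs : 0 ≤ s) (hsub : r + s < dist v w) (hadd : r + s < dist v (-w)) :
    Disjoint (doubleCap v (1 - r ^ 2 / 2)) (doubleCap w (1 - s ^ 2 / 2)) := by
  refine .mono (doubleCap_subset_union_closedBall hv hr)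
    (doubleCap_subset_union_closedBall hw hs) ?_
  simp only [disjoint_union_left, disjoint_union_right]
  refine ⟨⟨?_, ?_⟩, ?_, ?_⟩ <;> apply Metric.closedBall_disjoint_closedBall
  · exact hsub
  · rwa [← dist_neg_neg, neg_neg]
  · exact hadd
  · rwa [dist_neg_neg]

/-- Move `x` towards the maximiser `y` of `⟪·, y⟫` over the ball until the slab is left. -/
lemma exists_abs_inner_eq_and_inner_le {x y v : E} {t : ℝ} (hx : ‖x‖ ≤ 1) (hy : ‖y‖ = 1)
    (hxv : |⟪x, v⟫| ≤ t) (hyv : t ≤ |⟪y, v⟫|) :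
    ∃ z, ‖z‖ ≤ 1 ∧ |⟪z, v⟫| = t ∧ ⟪x, y⟫ ≤ ⟪z, y⟫ := by
  have hxy : ⟪x, y⟫ ≤ ⟪y, y⟫ := by
    rw [real_inner_self_eq_norm_sq, hy]
    simpa [hy] using (real_inner_le_norm x y).trans (mul_le_of_le_one_left (norm_nonneg y) hx)
  obtain ⟨z, hz, hzt⟩ := (convex_segment x y).isPreconnected.intermediate_value
    (left_mem_segment ℝ x y) (right_mem_segment ℝ x y)
    (f := fun z => |⟪z, v⟫|) (by fun_prop) ⟨hxv, hyv⟩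
  refine ⟨z, ?_, hzt, ?_⟩
  · exact mem_closedBall_zero_iff.1 <| (convex_closedBall (0 : E) 1).segment_subset
      (mem_closedBall_zero_iff.2 hx) (mem_closedBall_zero_iff.2 hy.le) hz
  · have hconv : Convex ℝ {w : E | ⟪x, y⟫ ≤ ⟪w, y⟫} :=
      convex_halfSpace_ge ((innerₛₗ ℝ).flip y).isLinear _
    exact hconv.segment_subset (le_refl ⟪x, y⟫) hxy hz

end Slab

lemma hausdorffDist_closedBall_le {E : Type*} [NormedAddCommGroup E] [NormedSpace ℝ E]
    {K : Set E} {δ : ℝ} (hδ₀ : 0 ≤ δ) (hδ₁ : δ ≤ 1) (hinner : Metric.closedBall 0 (1 - δ) ⊆ K)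
    (houter : K ⊆ Metric.closedBall 0 1) :
    Metric.hausdorffDist (Metric.closedBall (0 : E) 1) K ≤ δ := by
  refine Metric.hausdorffDist_le_of_mem_dist hδ₀ (fun x hx => ?_)
    fun x hx => ⟨x, houter hx, by simpa using hδ₀⟩
  have hx1 : ‖x‖ ≤ 1 := mem_closedBall_zero_iff.1 hx
  refine ⟨(1 - δ) • x, hinner ?_, ?_⟩
  · rw [mem_closedBall_zero_iff, norm_smul, Real.norm_of_nonneg (sub_nonneg.2 hδ₁)]
    exact mul_le_of_le_one_right (sub_nonneg.2 hδ₁) hx1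
  · rw [dist_eq_norm, sub_smul, one_smul, sub_sub_cancel, norm_smul, Real.norm_of_nonneg hδ₀]
    exact mul_le_of_le_one_right hδ₀ hx1

lemma hausdorffDist_truncatedBall_le {E : Type*} [NormedAddCommGroup E] [InnerProductSpace ℝ E]
    {v : ℕ → E} {t : ℕ → ℝ} {δ : ℝ} (hv : ∀ i, ‖v i‖ = 1) (hδ₀ : 0 ≤ δ) (hδ₁ : δ ≤ 1)
    (ht : ∀ i, 1 - δ ≤ t i) (n : ℕ) :
    Metric.hausdorffDist (Metric.closedBall (0 : E) 1) (truncatedBall v t n) ≤ δ :=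
  hausdorffDist_closedBall_le hδ₀ hδ₁
    (closedBall_subset_truncatedBall hv (sub_le_self 1 hδ₀) ht n)
    (truncatedBall_subset_closedBall v t n)

section SupportFunction

variable {d : ℕ} {K K' : Set (EuclideanSpace ℝ (Fin d))} {y v : EuclideanSpace ℝ (Fin d)}

lemma bddAbove_image_inner (hK : Bornology.IsBounded K) (y : EuclideanSpace ℝ (Fin d)) :
    BddAbove ((fun x => ⟪x, y⟫) '' K) :=
  (((innerSL ℝ).flip y).lipschitz.isBounded_image hK).bddAbove

lemma inner_le_suppFn (hK : Bornology.IsBounded K) {x : EuclideanSpace ℝ (Fin d)} (hx : x ∈ K)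
    (y : EuclideanSpace ℝ (Fin d)) : ⟪x, y⟫ ≤ suppFn K y :=
  le_csSup (bddAbove_image_inner hK y) (mem_image_of_mem _ hx)

lemma suppFn_le (hK : K.Nonempty) {c : ℝ} (h : ∀ x ∈ K, ⟪x, y⟫ ≤ c) : suppFn K y ≤ c :=
  csSup_le (hK.image _) (forall_mem_image.2 h)

lemma suppFn_mono (hK : K.Nonempty) (hK' : Bornology.IsBounded K') (h : K ⊆ K')
    (y : EuclideanSpace ℝ (Fin d)) : suppFn K y ≤ suppFn K' y :=
  suppFn_le hK fun _ hx => inner_le_suppFn hK' (h hx) y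

lemma suppFn_eq_one (hK : K ⊆ Metric.closedBall 0 1) (hy : ‖y‖ = 1) (hyK : y ∈ K) :
    suppFn K y = 1 := by
  apply le_antisymm
  · refine suppFn_le ⟨y, hyK⟩ fun x hx => (real_inner_le_norm x y).trans ?_
    simpa [hy] using hK hx
  · have := inner_le_suppFn (Metric.isBounded_closedBall.subset hK) hyK y
    rwa [real_inner_self_eq_norm_sq, hy, one_pow] at this

lemma continuous_suppFn (hne : K.Nonempty) (hK : Bornology.IsBounded K) :
    Continuous (suppFn K) := by
  obtain ⟨R, hR⟩ := hK.exists_norm_le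
  refine (LipschitzWith.of_le_add_mul' R fun y z => suppFn_le hne fun x hx => ?_).continuous
  calc ⟪x, y⟫ = ⟪x, z⟫ + ⟪x, y - z⟫ := by rw [inner_sub_right]; ring
    _ ≤ suppFn K z + R * dist y z := by
      rw [dist_eq_norm]
      gcongr
      · exact inner_le_suppFn hK hx z
      · exact (real_inner_le_norm _ _).trans (by gcongr; exact hR x hx)

lemma suppFn_image (L : EuclideanSpace ℝ (Fin d) ≃ₗᵢ[ℝ] EuclideanSpace ℝ (Fin d))
    (K : Set (EuclideanSpace ℝ (Fin d))) (y : EuclideanSpace ℝ (Fin d)) :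
    suppFn (L '' K) (L y) = suppFn K y := by
  simp only [suppFn, image_image, L.inner_map_map]

/-- Splitting `y = v / 2 + (y - v / 2)` makes the error quadratic in `‖y - v‖`; splitting off all of
`v` would leave a linear one. -/
lemma suppFn_closedBall_inter_slab_le {t : ℝ} (hv : ‖v‖ = 1) (hy : ‖y‖ = 1) (ht : 0 ≤ t) :
    suppFn (Metric.closedBall 0 1 ∩ slab v t) y ≤ (1 + t + ‖y - v‖ ^ 2) / 2 := by
  have hnorm : ‖y - (1 / 2 : ℝ) • v‖ ≤ (1 + ‖y - v‖ ^ 2) / 2 := by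
    apply le_of_sq_le_sq _ (by positivity)
    calc ‖y - (1 / 2 : ℝ) • v‖ ^ 2 = 1 / 4 + ‖y - v‖ ^ 2 / 2 := by
          rw [norm_sub_sq_real, norm_sub_sq_real, inner_smul_right, norm_smul, hv, hy]
          norm_num
          ring
      _ ≤ ((1 + ‖y - v‖ ^ 2) / 2) ^ 2 := by nlinarith [sq_nonneg (‖y - v‖ ^ 2)]
  refine suppFn_le (closedBall_inter_slab_nonempty v ht) fun x ⟨hx, hxv⟩ => ?_
  calc ⟪x, y⟫ = ⟪x, v⟫ / 2 + ⟪x, y - (1 / 2 : ℝ) • v⟫ := by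
        rw [inner_sub_right, inner_smul_right]
        ring
    _ ≤ t / 2 + 1 * ((1 + ‖y - v‖ ^ 2) / 2) := by
      gcongr
      · exact (le_abs_self _).trans hxv
      · exact (real_inner_le_norm _ _).trans (by gcongr; exact mem_closedBall_zero_iff.1 hx)
    _ = (1 + t + ‖y - v‖ ^ 2) / 2 := by ring

section TruncatedBall

open Function

variable {v : ℕ → EuclideanSpace ℝ (Fin d)} {t : ℕ → ℝ}

lemma suppFn_truncatedBall_of_notMem_slab (ht : ∀ i, 0 ≤ t i)
    (hdisj : Pairwise (Disjoint on fun i => doubleCap (v i) (t i))) (hy : ‖y‖ = 1) {i n : ℕ}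
    (hi : i < n) (hyi : y ∉ slab (v i) (t i)) :
    suppFn (truncatedBall v t n) y = suppFn (Metric.closedBall 0 1 ∩ slab (v i) (t i)) y := by
  apply le_antisymm
  · exact suppFn_mono (truncatedBall_nonempty ht n)
      (Metric.isBounded_closedBall.subset inter_subset_left)
      (subset_inter (truncatedBall_subset_closedBall v t n) (truncatedBall_subset_slab v t hi)) y
  refine suppFn_le (closedBall_inter_slab_nonempty (v i) (ht i)) fun x ⟨hx, hxi⟩ => ?_
  obtain ⟨z, hz, hzi, hxz⟩ := exists_abs_inner_eq_and_inner_le (mem_closedBall_zero_iff.1 hx) hy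
    hxi (not_le.1 hyi).le
  have hzn : z ∈ truncatedBall v t n := by
    refine ⟨mem_closedBall_zero_iff.2 hz, mem_iInter₂.2 fun j _ => ?_⟩
    rcases eq_or_ne i j with rfl | hij
    · exact hzi.le
    · exact mem_slab_of_mem_doubleCap hdisj hij ⟨hz, hzi.ge⟩
  exact hxz.trans (inner_le_suppFn
    (Metric.isBounded_closedBall.subset (truncatedBall_subset_closedBall v t n)) hzn y)

lemma one_sub_suppFn_truncatedBall (ht : ∀ i, 0 ≤ t i)
    (hdisj : Pairwise (Disjoint on fun i => doubleCap (v i) (t i))) (hy : ‖y‖ = 1) (n : ℕ) :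
    1 - suppFn (truncatedBall v t n) y =
      ∑ i ∈ Finset.range n, (1 - suppFn (Metric.closedBall 0 1 ∩ slab (v i) (t i)) y) := by
  have hyB : y ∈ Metric.closedBall 0 1 := mem_closedBall_zero_iff.2 hy.le
  have hzero : ∀ i, y ∈ slab (v i) (t i) →
      1 - suppFn (Metric.closedBall 0 1 ∩ slab (v i) (t i)) y = 0 := fun i hi =>
    sub_eq_zero.2 (suppFn_eq_one inter_subset_left hy ⟨hyB, hi⟩).symm
  by_cases h : ∃ i < n, y ∉ slab (v i) (t i)
  · obtain ⟨i, hi, hyi⟩ := h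
    rw [suppFn_truncatedBall_of_notMem_slab ht hdisj hy hi hyi,
      Finset.sum_eq_single_of_mem i (Finset.mem_range.2 hi)]
    exact fun j _ hji => hzero j <|
      mem_slab_of_mem_doubleCap hdisj hji.symm ⟨hy.le, (not_le.1 hyi).le⟩
  · push Not at h
    rw [Finset.sum_eq_zero fun i hi => hzero i (h i (Finset.mem_range.1 hi)),
      suppFn_eq_one (truncatedBall_subset_closedBall v t n) hy ⟨hyB, mem_iInter₂.2 h⟩, sub_self]

end TruncatedBall

end SupportFunction

section Greedy

variable {α : Type*}

lemma exists_seq_forall_lt {R : ℕ → α → α → Prop}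
    (h : ∀ n (g : Fin n → α), ∃ v, ∀ i : Fin n, R i (g i) v) :
    ∃ f : ℕ → α, ∀ n, ∀ i < n, R i (f i) (f n) := by
  choose F hF using h
  let f : ℕ → α := Nat.strongRec fun n ih => F n fun i => ih i i.2
  refine ⟨f, fun n i hi => ?_⟩
  rw [show f n = F n fun i => f i from Nat.strongRec_eq _ n]
  exact hF n (fun i => f i) ⟨i, hi⟩

lemma exists_seq_notMem_of_tsum_measure_lt [MeasurableSpace α] {μ : Measure α} {A : ℕ → α → Set α}
    {b : ℕ → ENNReal} (hA : ∀ i x, μ (A i x) ≤ b i) (hb : ∑' i, b i < μ univ) :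
    ∃ f : ℕ → α, ∀ n, ∀ i < n, f n ∉ A i (f i) := by
  refine exists_seq_forall_lt (R := fun i x y => y ∉ A i x) fun n g => ?_
  have hlt : μ (⋃ i : Fin n, A i (g i)) < μ univ :=
    calc μ (⋃ i : Fin n, A i (g i)) ≤ ∑' i : Fin n, μ (A i (g i)) := measure_iUnion_le _
      _ ≤ ∑' i : Fin n, b i := ENNReal.tsum_le_tsum fun i => hA i (g i)
      _ ≤ ∑' i, b i := ENNReal.tsum_comp_le_tsum_of_injective Fin.val_injective b
      _ < μ univ := hb
  obtain ⟨v, hv⟩ := (ne_univ_iff_exists_notMem _).1 (ne_of_apply_ne μ hlt.ne)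
  exact ⟨v, by simpa using hv⟩

end Greedy

section Cone

open scoped Pointwise

variable {E : Type*} [NormedAddCommGroup E] [NormedSpace ℝ E]

lemma Ioo_smul_closedBall_subset {x : E} (hx : ‖x‖ ≤ 1) {ρ : ℝ} (hρ : 0 < ρ) :
    Ioo (0 : ℝ) 1 • Metric.closedBall x ρ ⊆
      ⋃ k ∈ Finset.range (⌊1 / ρ⌋₊ + 1), Metric.closedBall ((k * ρ) • x) (2 * ρ) := by
  rintro _ ⟨s, ⟨hs0, hs1⟩, y, hy, rfl⟩
  have hfloor : ⌊s / ρ⌋₊ * ρ ≤ s := (le_div_iff₀ hρ).1 (Nat.floor_le (by positivity))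
  have hlt : s < (⌊s / ρ⌋₊ + 1) * ρ := (div_lt_iff₀ hρ).1 (Nat.lt_floor_add_one _)
  refine mem_iUnion₂.2 ⟨⌊s / ρ⌋₊, ?_, mem_closedBall_iff_norm.2 ?_⟩
  · rw [Finset.mem_range, Nat.lt_succ_iff]
    exact Nat.floor_mono (by gcongr)
  calc ‖s • y - (⌊s / ρ⌋₊ * ρ) • x‖ = ‖s • (y - x) + (s - ⌊s / ρ⌋₊ * ρ) • x‖ := by
        rw [smul_sub, sub_smul, sub_add_sub_cancel]
    _ ≤ ‖s • (y - x)‖ + ‖(s - ⌊s / ρ⌋₊ * ρ) • x‖ := norm_add_le _ _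
    _ ≤ 1 * ρ + ρ * 1 := by
      rw [norm_smul, norm_smul, Real.norm_of_nonneg hs0.le, Real.norm_of_nonneg (by linarith)]
      gcongr
      · exact mem_closedBall_iff_norm.1 hy
      · linarith
    _ = 2 * ρ := by ring

variable [FiniteDimensional ℝ E] [MeasurableSpace E] [BorelSpace E]

lemma measure_Ioo_smul_closedBall_le (μ : Measure E) [μ.IsAddHaarMeasure] [Nontrivial E] {x : E}
    (hx : ‖x‖ ≤ 1) {ρ : ℝ} (hρ₀ : 0 < ρ) (hρ₁ : ρ ≤ 1) :
    μ (Ioo (0 : ℝ) 1 • Metric.closedBall x ρ) ≤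
      ENNReal.ofReal (2 ^ (Module.finrank ℝ E + 1) * ρ ^ (Module.finrank ℝ E - 1)) *
        μ (Metric.ball 0 1) := by
  set m := Module.finrank ℝ E
  have hcount : ((⌊1 / ρ⌋₊ + 1 : ℕ) : ℝ) ≤ 2 / ρ := by
    have hfloor : (⌊1 / ρ⌋₊ : ℝ) ≤ 1 / ρ := Nat.floor_le (by positivity)
    have hone : 1 ≤ 1 / ρ := (one_le_div hρ₀).2 hρ₁
    push_cast
    linarith [show 2 / ρ = 1 / ρ + 1 / ρ by ring]
  have hpow : ρ ^ m = ρ ^ (m - 1) * ρ := (pow_sub_one_mul Module.finrank_pos.ne' ρ).symm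
  calc μ (Ioo (0 : ℝ) 1 • Metric.closedBall x ρ)
      ≤ ∑ k ∈ Finset.range (⌊1 / ρ⌋₊ + 1), μ (Metric.closedBall ((k * ρ) • x) (2 * ρ)) :=
        (measure_mono (Ioo_smul_closedBall_subset hx hρ₀)).trans (measure_biUnion_finset_le _ _)
    _ = ENNReal.ofReal ((⌊1 / ρ⌋₊ + 1 : ℕ) * (2 * ρ) ^ m) * μ (Metric.ball 0 1) := by
        simp only [Measure.addHaar_closedBall μ _ (by positivity : 0 ≤ 2 * ρ), Finset.sum_const,
          Finset.card_range, nsmul_eq_mul]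
        rw [← mul_assoc, ENNReal.ofReal_mul (Nat.cast_nonneg _), ENNReal.ofReal_natCast]
    _ ≤ ENNReal.ofReal (2 / ρ * (2 * ρ) ^ m) * μ (Metric.ball 0 1) := by gcongr
    _ = ENNReal.ofReal (2 ^ (m + 1) * ρ ^ (m - 1)) * μ (Metric.ball 0 1) := by
        rw [mul_pow, hpow]
        congr 2
        field_simp
        ring

lemma toSphere_closedBall_le (μ : Measure E) [μ.IsAddHaarMeasure]
    (x : Metric.sphere (0 : E) 1) {ρ : ℝ} (hρ₀ : 0 < ρ) (hρ₁ : ρ ≤ 1) :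
    μ.toSphere (Metric.closedBall x ρ) ≤
      ENNReal.ofReal (2 ^ (Module.finrank ℝ E + 1) * ρ ^ (Module.finrank ℝ E - 1)) *
        μ.toSphere univ := by
  have : Nontrivial E := ⟨x, 0, ne_zero_of_mem_unit_sphere x⟩
  rw [Measure.toSphere_apply' _ Metric.isClosed_closedBall.measurableSet,
    Measure.toSphere_apply_univ, mul_left_comm]
  gcongr
  refine (measure_mono (smul_subset_smul_left ?_)).trans
    (measure_Ioo_smul_closedBall_le μ (norm_eq_of_mem_sphere x).le hρ₀ hρ₁)
  exact image_subset_iff.2 fun _ hy => hy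

end Cone

section SphereMeasure

open Function
open scoped Pointwise

section Isometry

variable {E F : Type*} [NormedAddCommGroup E] [NormedSpace ℝ E] [NormedAddCommGroup F]
  [NormedSpace ℝ F]

/-- The homeomorphism between unit spheres induced by a linear isometry, through which isometry
invariance of the surface measure is expressed. -/
def sphereHomeomorph (L : E ≃ₗᵢ[ℝ] F) : Metric.sphere (0 : E) 1 ≃ₜ Metric.sphere (0 : F) 1 :=
  L.toHomeomorph.subtype fun x => by simp

@[simp]
lemma coe_sphereHomeomorph (L : E ≃ₗᵢ[ℝ] F) (y : Metric.sphere (0 : E) 1) :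
    (sphereHomeomorph L y : F) = L y :=
  rfl

lemma measurePreserving_sphereHomeomorph [MeasurableSpace E] [BorelSpace E] [MeasurableSpace F]
    [BorelSpace F] {μ : Measure E} {ν : Measure F} {L : E ≃ₗᵢ[ℝ] F} (hL : MeasurePreserving L μ ν) :
    MeasurePreserving (sphereHomeomorph L) μ.toSphere ν.toSphere := by
  refine ⟨(sphereHomeomorph L).measurable, Measure.ext fun s hs => ?_⟩
  have hm := (sphereHomeomorph L).measurable
  have hcone : L '' (Ioo (0 : ℝ) 1 • ((↑) '' (sphereHomeomorph L ⁻¹' s))) =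
      Ioo (0 : ℝ) 1 • ((↑) '' s) := by
    refine (image_image2_distrib_right fun c x => map_smul L c x).trans ?_
    rw [image_comm fun y => (coe_sphereHomeomorph L y).symm,
      (sphereHomeomorph L).image_preimage]
    rfl
  rw [Measure.map_apply hm hs, Measure.toSphere_apply' _ hs, Measure.toSphere_apply' _ (hm hs),
    ← hcone, ← hL.measure_preimage_emb L.toHomeomorph.measurableEmbedding,
    L.toLinearEquiv.finrank_eq]
  congr 2
  exact (preimage_image_eq _ L.injective).symm

end Isometry

variable {d : ℕ}

lemma measurePreserving_sphereMeasure
    (L : EuclideanSpace ℝ (Fin d) ≃ₗᵢ[ℝ] EuclideanSpace ℝ (Fin d)) :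
    MeasurePreserving (sphereHomeomorph L) (sphereMeasure d) (sphereMeasure d) :=
  (measurePreserving_sphereHomeomorph L.measurePreserving).smul_measure _

instance [NeZero d] : IsProbabilityMeasure (sphereMeasure d) where
  measure_univ := by
    have := Measure.toSphere_ne_zero (volume : Measure (EuclideanSpace ℝ (Fin d)))
    exact ENNReal.inv_mul_cancel (Measure.measure_univ_ne_zero.2 this) (measure_ne_top _ _)

lemma sphereMeasure_closedBall_le [NeZero d]
    (x : Metric.sphere (0 : EuclideanSpace ℝ (Fin d)) 1) {ρ : ℝ} (hρ₀ : 0 < ρ) (hρ₁ : ρ ≤ 1) :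
    sphereMeasure d (Metric.closedBall x ρ) ≤ ENNReal.ofReal (2 ^ (d + 1) * ρ ^ (d - 1)) := by
  have hle := toSphere_closedBall_le volume x hρ₀ hρ₁
  rw [finrank_euclideanSpace_fin] at hle
  calc sphereMeasure d (Metric.closedBall x ρ)
      ≤ (volume.toSphere univ)⁻¹ *
          (ENNReal.ofReal (2 ^ (d + 1) * ρ ^ (d - 1)) * volume.toSphere univ) :=
        mul_le_mul_right hle _
    _ = ENNReal.ofReal (2 ^ (d + 1) * ρ ^ (d - 1)) * sphereMeasure d univ := by
        rw [mul_left_comm]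
        rfl
    _ = ENNReal.ofReal (2 ^ (d + 1) * ρ ^ (d - 1)) := by rw [measure_univ, mul_one]

lemma pow_le_sphereMeasure_real_ball [NeZero d]
    (x : Metric.sphere (0 : EuclideanSpace ℝ (Fin d)) 1) {r : ℝ} (hr₀ : 0 < r) (hr₂ : r ≤ 2) :
    (r / 4) ^ d ≤ (sphereMeasure d).real (Metric.ball x r) := by
  have hball := Measure.toSphereBallBound_mul_measureReal_unitBall_le_toSphere_ball
    (volume : Measure (EuclideanSpace ℝ (Fin d))) hr₀ x
  have hpos : 0 < (volume : Measure (EuclideanSpace ℝ (Fin d))).real (Metric.ball 0 1) :=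
    ENNReal.toReal_pos (Metric.measure_ball_pos _ _ one_pos).ne' measure_ball_lt_top.ne
  have hd : (0 : ℝ) < d := Nat.cast_pos.2 (NeZero.pos d)
  rw [Measure.toSphereBallBound, finrank_euclideanSpace_fin, if_pos ⟨NeZero.ne d, hr₀⟩,
    min_eq_left (Real.toNNReal_le_iff_le_coe.2 hr₂)] at hball
  push_cast at hball
  rw [Real.coe_toNNReal _ hr₀.le] at hball
  rw [sphereMeasure, measureReal_ennreal_smul_apply, ENNReal.toReal_inv, ← measureReal_def,
    Measure.toSphere_real_apply_univ, finrank_euclideanSpace_fin, le_inv_mul_iff₀ (by positivity)]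
  linarith

lemma exists_pairwise_disjoint_doubleCap [NeZero d] {r : ℕ → ℝ} (hr₀ : ∀ i, 0 < r i)
    (hr₁ : ∀ i, 2 * r i ≤ 1) (hanti : Antitone r) (hsum : Summable fun i => r i ^ (d - 1))
    (hlt : ∑' i, r i ^ (d - 1) < 1 / 2 ^ (2 * d + 1)) :
    ∃ v : ℕ → EuclideanSpace ℝ (Fin d), (∀ i, ‖v i‖ = 1) ∧
      Pairwise (Disjoint on fun i => doubleCap (v i) (1 - r i ^ 2 / 2)) := by
  have hcaps (i : ℕ) (x : Metric.sphere (0 : EuclideanSpace ℝ (Fin d)) 1) :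
      sphereMeasure d (Metric.closedBall x (2 * r i) ∪ Metric.closedBall (-x) (2 * r i)) ≤
        ENNReal.ofReal (2 ^ (2 * d + 1) * r i ^ (d - 1)) := by
    have hi := hr₀ i
    calc sphereMeasure d (Metric.closedBall x (2 * r i) ∪ Metric.closedBall (-x) (2 * r i))
        ≤ ENNReal.ofReal (2 ^ (d + 1) * (2 * r i) ^ (d - 1)) +
            ENNReal.ofReal (2 ^ (d + 1) * (2 * r i) ^ (d - 1)) :=
          (measure_union_le _ _).trans <| add_le_add
            (sphereMeasure_closedBall_le x (by positivity) (hr₁ i))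
            (sphereMeasure_closedBall_le (-x) (by positivity) (hr₁ i))
      _ = ENNReal.ofReal (2 ^ (2 * d + 1) * r i ^ (d - 1)) := by
          rw [← ENNReal.ofReal_add (by positivity) (by positivity)]
          obtain ⟨e, rfl⟩ := Nat.exists_eq_add_one.2 (NeZero.pos d)
          rw [Nat.add_sub_cancel]
          congr 1
          ring
  have htotal : ∑' i, ENNReal.ofReal (2 ^ (2 * d + 1) * r i ^ (d - 1)) <
      sphereMeasure d univ := by
    rw [measure_univ, ← ENNReal.ofReal_tsum_of_nonneg
      (fun i => by have := hr₀ i; positivity) (hsum.mul_left _), ENNReal.ofReal_lt_one,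
      tsum_mul_left]
    rwa [lt_div_iff₀' (by positivity)] at hlt
  obtain ⟨f, hf⟩ := exists_seq_notMem_of_tsum_measure_lt hcaps htotal
  refine ⟨fun i => f i, fun i => norm_eq_of_mem_sphere _, (pairwise_disjoint_on _).2 ?_⟩
  intro i n hin
  have hout := hf n i hin
  rw [mem_union, not_or, Metric.mem_closedBall, Metric.mem_closedBall, not_le, not_le,
    Subtype.dist_eq, Subtype.dist_eq, coe_neg_sphere] at hout
  have hrad : r n + r i ≤ 2 * r i := by linarith [hanti hin.le]
  exact (disjoint_doubleCap (norm_eq_of_mem_sphere _) (norm_eq_of_mem_sphere _) (hr₀ n).le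
    (hr₀ i).le (hrad.trans_lt hout.1) (hrad.trans_lt hout.2)).symm

end SphereMeasure

section Dp

open Function

variable {d : ℕ} {p : ℝ} {K K' C : Set (EuclideanSpace ℝ (Fin d))}

lemma Dp_image (p : ℝ) (L : EuclideanSpace ℝ (Fin d) ≃ₗᵢ[ℝ] EuclideanSpace ℝ (Fin d))
    (K K' : Set (EuclideanSpace ℝ (Fin d))) : Dp p (L '' K) (L '' K') = Dp p K K' := by
  rw [Dp, ← (measurePreserving_sphereMeasure L).integral_comp
    (sphereHomeomorph L).measurableEmbedding]
  simp only [coe_sphereHomeomorph, suppFn_image, Dp]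

lemma integrable_abs_suppFn_sub_rpow [NeZero d] (hp : 0 ≤ p) (hK : K.Nonempty)
    (hKb : Bornology.IsBounded K) (hK' : K'.Nonempty) (hK'b : Bornology.IsBounded K') :
    Integrable (fun y : Metric.sphere (0 : EuclideanSpace ℝ (Fin d)) 1 =>
      |suppFn K (y : EuclideanSpace ℝ (Fin d)) - suppFn K' (y : EuclideanSpace ℝ (Fin d))| ^ p)
      (sphereMeasure d) := by
  have hcont := ((continuous_suppFn hK hKb).sub (continuous_suppFn hK' hK'b)).comp
    (continuous_subtype_val (p := (· ∈ Metric.sphere (0 : EuclideanSpace ℝ (Fin d)) 1)))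
  exact (hcont.abs.rpow_const fun _ => .inr hp).integrable_of_hasCompactSupport
    (HasCompactSupport.of_compactSpace _)

lemma Dp_le_Dp_of_subset [NeZero d] (hp : 0 < p) (hK : K.Nonempty) (hKK' : K ⊆ K') (hK'C : K' ⊆ C)
    (hC : Bornology.IsBounded C) : Dp p C K' ≤ Dp p C K := by
  have hK' := hK.mono hKK'
  have hK'b := hC.subset hK'C
  refine rpow_le_rpow (integral_nonneg fun y => by positivity) (integral_mono
    (integrable_abs_suppFn_sub_rpow hp.le (hK'.mono hK'C) hC hK' hK'b)
    (integrable_abs_suppFn_sub_rpow hp.le (hK'.mono hK'C) hC hK (hK'b.subset hKK'))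
    fun y => ?_) (by positivity)
  have hle := suppFn_mono hK hK'b hKK' y
  have hle' := suppFn_mono hK' hC hK'C y
  dsimp only
  rw [abs_of_nonneg (sub_nonneg.2 hle'), abs_of_nonneg (sub_nonneg.2 (hle.trans hle'))]
  gcongr

lemma mul_measureReal_rpow_le_Dp [NeZero d] (hp : 0 < p) (hK : K.Nonempty)
    (hKb : Bornology.IsBounded K) (hK' : K'.Nonempty) (hK'b : Bornology.IsBounded K') {δ : ℝ}
    (hδ : 0 ≤ δ) {s : Set (Metric.sphere (0 : EuclideanSpace ℝ (Fin d)) 1)} (hs : MeasurableSet s)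
    (h : ∀ y ∈ s, δ ≤ |suppFn K (y : EuclideanSpace ℝ (Fin d)) - suppFn K' y|) :
    δ * (sphereMeasure d).real s ^ (1 / p) ≤ Dp p K K' := by
  have hint := integrable_abs_suppFn_sub_rpow hp.le hK hKb hK' hK'b
  calc δ * (sphereMeasure d).real s ^ (1 / p)
      = (δ ^ p * (sphereMeasure d).real s) ^ (1 / p) := by
        rw [mul_rpow (by positivity) measureReal_nonneg, one_div, rpow_rpow_inv hδ hp.ne']
    _ ≤ Dp p K K' := by
      refine rpow_le_rpow (by positivity) ?_ (by positivity)
      exact (setIntegral_ge_of_const_le_real hs (measure_ne_top _ _)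
        (fun y hy => rpow_le_rpow hδ (h y hy) hp.le) hint.integrableOn).trans
        (setIntegral_le_integral hint (.of_forall fun y => by positivity))

lemma Dp_truncatedBall_succ {v : ℕ → EuclideanSpace ℝ (Fin d)} {t : ℕ → ℝ} (ht : ∀ i, 0 ≤ t i)
    (hdisj : Pairwise (Disjoint on fun i => doubleCap (v i) (t i))) (n : ℕ) :
    Dp p (truncatedBall v t n) (truncatedBall v t (n + 1)) =
      Dp p (Metric.closedBall 0 1) (Metric.closedBall 0 1 ∩ slab (v n) (t n)) := by
  have hgap (y : Metric.sphere (0 : EuclideanSpace ℝ (Fin d)) 1) :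
      suppFn (truncatedBall v t n) y - suppFn (truncatedBall v t (n + 1)) y =
        suppFn (Metric.closedBall 0 1) (y : EuclideanSpace ℝ (Fin d)) -
          suppFn (Metric.closedBall 0 1 ∩ slab (v n) (t n)) y := by
    have hy := norm_eq_of_mem_sphere y
    have hsucc := one_sub_suppFn_truncatedBall ht hdisj hy (n + 1)
    rw [Finset.sum_range_succ, ← one_sub_suppFn_truncatedBall ht hdisj hy n] at hsucc
    rw [suppFn_eq_one Subset.rfl hy (mem_closedBall_zero_iff.2 hy.le)]
    linarith
  simp only [Dp, hgap]

lemma Dp_closedBall_inter_slab_le [NeZero d] (hp : 0 < p) {v w : EuclideanSpace ℝ (Fin d)}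
    (hv : ‖v‖ = 1) (hw : ‖w‖ = 1) {s t : ℝ} (hs : 0 ≤ s) (hst : s ≤ t) :
    Dp p (Metric.closedBall 0 1) (Metric.closedBall 0 1 ∩ slab v t) ≤
      Dp p (Metric.closedBall 0 1) (Metric.closedBall 0 1 ∩ slab w s) := by
  obtain ⟨L, rfl⟩ : ∃ L : EuclideanSpace ℝ (Fin d) ≃ₗᵢ[ℝ] EuclideanSpace ℝ (Fin d), L v = w :=
    ⟨_, Submodule.reflection_sub (hv.trans hw.symm)⟩
  have hball : L '' Metric.closedBall 0 1 = Metric.closedBall 0 1 := by simp [L.image_closedBall]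
  have himage : L '' (Metric.closedBall 0 1 ∩ slab v s) =
      Metric.closedBall 0 1 ∩ slab (L v) s := by
    rw [image_inter L.injective, hball, image_slab]
  rw [← himage]
  nth_rewrite 3 [← hball]
  rw [Dp_image]
  exact Dp_le_Dp_of_subset hp (closedBall_inter_slab_nonempty v hs)
    (inter_subset_inter_right _ (slab_subset_slab v hst)) inter_subset_left
    Metric.isBounded_closedBall

lemma mul_rpow_le_Dp_closedBall_inter_slab [NeZero d] (hp : 0 < p) {v : EuclideanSpace ℝ (Fin d)}
    (hv : ‖v‖ = 1) {r : ℝ} (hr₀ : 0 < r) (hr₁ : r ≤ 1) :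
    (1 / 8) ^ (1 + d / p) * r ^ (2 + d / p) ≤
      Dp p (Metric.closedBall 0 1) (Metric.closedBall 0 1 ∩ slab v (1 - r ^ 2 / 2)) := by
  let x : Metric.sphere (0 : EuclideanSpace ℝ (Fin d)) 1 := ⟨v, mem_sphere_zero_iff_norm.2 hv⟩
  have ht : 0 ≤ 1 - r ^ 2 / 2 := by nlinarith
  have hgap : ∀ y ∈ Metric.ball x (r / 2), r ^ 2 / 8 ≤
      |suppFn (Metric.closedBall 0 1) (y : EuclideanSpace ℝ (Fin d)) -
        suppFn (Metric.closedBall 0 1 ∩ slab v (1 - r ^ 2 / 2)) y| := by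
    intro y hy
    have hy1 := norm_eq_of_mem_sphere y
    have hyv : ‖(y : EuclideanSpace ℝ (Fin d)) - v‖ ≤ r / 2 := (mem_ball_iff_norm.1 hy).le
    have hslab := suppFn_closedBall_inter_slab_le hv hy1 ht
    have hsq := pow_le_pow_left₀ (norm_nonneg _) hyv 2
    rw [suppFn_eq_one Subset.rfl hy1 (mem_closedBall_zero_iff.2 hy1.le)]
    exact le_trans (by linarith) (le_abs_self _)
  calc (1 / 8) ^ (1 + d / p) * r ^ (2 + d / p)
      = r ^ 2 / 8 * ((r / 2 / 4) ^ d) ^ (1 / p) := by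
        rw [rpow_add (by norm_num), rpow_add hr₀, rpow_one, rpow_two, ← rpow_natCast (r / 2 / 4),
          ← rpow_mul (by positivity), mul_one_div, show r / 2 / 4 = 1 / 8 * r by ring,
          mul_rpow (by norm_num) hr₀.le]
        ring
    _ ≤ r ^ 2 / 8 * (sphereMeasure d).real (Metric.ball x (r / 2)) ^ (1 / p) := by
        gcongr
        exact pow_le_sphereMeasure_real_ball x (by positivity) (by linarith)
    _ ≤ Dp p (Metric.closedBall 0 1) (Metric.closedBall 0 1 ∩ slab v (1 - r ^ 2 / 2)) :=
        mul_measureReal_rpow_le_Dp hp (Metric.nonempty_closedBall.2 zero_le_one)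
          Metric.isBounded_closedBall (closedBall_inter_slab_nonempty v ht)
          (Metric.isBounded_closedBall.subset inter_subset_left) (by positivity)
          measurableSet_ball hgap

lemma antitone_Dp_truncatedBall [NeZero d] (hp : 0 < p) {v : ℕ → EuclideanSpace ℝ (Fin d)}
    {t : ℕ → ℝ} (hv : ∀ i, ‖v i‖ = 1) (ht : ∀ i, 0 ≤ t i) (hmono : Monotone t)
    (hdisj : Pairwise (Disjoint on fun i => doubleCap (v i) (t i))) :
    Antitone fun i => Dp p (truncatedBall v t i) (truncatedBall v t (i + 1)) := by
  simp only [Dp_truncatedBall_succ ht hdisj]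
  exact fun i j hij => Dp_closedBall_inter_slab_le hp (hv j) (hv i) (ht i) (hmono hij)

lemma not_summable_Dp_truncatedBall [NeZero d] (hp : 0 < p) {v : ℕ → EuclideanSpace ℝ (Fin d)}
    {r : ℕ → ℝ} (hv : ∀ i, ‖v i‖ = 1) (hr₀ : ∀ i, 0 < r i) (hr₁ : ∀ i, r i ≤ 1)
    (hdisj : Pairwise (Disjoint on fun i => doubleCap (v i) (1 - r i ^ 2 / 2)))
    (hr : ¬ Summable fun i => r i ^ (2 + d / p)) :
    ¬ Summable fun i => Dp p (truncatedBall v (fun i => 1 - r i ^ 2 / 2) i)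
      (truncatedBall v (fun i => 1 - r i ^ 2 / 2) (i + 1)) := by
  have ht (i : ℕ) : 0 ≤ 1 - r i ^ 2 / 2 := by nlinarith [hr₀ i, hr₁ i]
  simp only [Dp_truncatedBall_succ ht hdisj]
  exact fun h => hr <| (summable_mul_left_iff (by positivity)).1 <| h.of_nonneg_of_le
    (fun i => mul_nonneg (by positivity) (rpow_nonneg (hr₀ i).le _))
    fun i => mul_rpow_le_Dp_closedBall_inter_slab hp (hv i) (hr₀ i) (hr₁ i)

end Dp

open Filter Topology in
lemma exists_antitone_summable_pow_not_summable_rpow {β : ℝ} {k : ℕ} (hβ : 0 < β) (hβk : β < k)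
    {δ : ℝ} (hδ : 0 < δ) :
    ∃ r : ℕ → ℝ, (∀ n, 0 < r n) ∧ (∀ n, r n < δ) ∧ Antitone r ∧
      Summable (fun n => r n ^ k) ∧ ∑' n, r n ^ k < δ ∧ ¬ Summable (fun n => r n ^ β) := by
  let u : ℕ → ℝ := fun n => (n : ℝ) ^ (-β⁻¹)
  have hu_pow (n : ℕ) : u n ^ k = (n : ℝ) ^ (-(k / β)) := by
    rw [← rpow_natCast, ← rpow_mul n.cast_nonneg]
    ring_nf
  have hu_rpow (n : ℕ) : u n ^ β = (n : ℝ) ^ (-1 : ℝ) := by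
    rw [← rpow_mul n.cast_nonneg, neg_mul, inv_mul_cancel₀ hβ.ne']
  have hsum : Summable fun n => u n ^ k := by
    simp only [hu_pow, Real.summable_nat_rpow, neg_lt_neg_iff]
    exact (one_lt_div hβ).2 hβk
  have hlim : Tendsto u atTop (𝓝 0) :=
    (tendsto_rpow_neg_atTop (inv_pos.2 hβ)).comp tendsto_natCast_atTop_atTop
  obtain ⟨N, hN, huN, hsumN⟩ := ((eventually_gt_atTop 0).and <| (hlim.eventually_lt_const hδ).and <|
    (tendsto_sum_nat_add fun n => u n ^ k).eventually_lt_const hδ).exists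
  have hpos (n : ℕ) : (0 : ℝ) < (n + N : ℕ) := Nat.cast_pos.2 (by omega)
  have hanti : Antitone fun n => u (n + N) := fun m n hmn =>
    rpow_le_rpow_of_nonpos (hpos m) (by gcongr) (neg_nonpos.2 (inv_pos.2 hβ).le)
  refine ⟨fun n => u (n + N), fun n => rpow_pos_of_pos (hpos n) _, fun n => ?_, hanti,
    hsum.comp_injective (add_left_injective N), hsumN, fun h => ?_⟩
  · exact (hanti n.zero_le).trans_lt (by simpa using huN)
  · have hu : Summable fun n => u n ^ β := (summable_nat_add_iff N).1 h
    simp [hu_rpow, Real.summable_nat_rpow] at hu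

lemma two_add_div_lt_sub_one {p : ℝ} (hp : 1 < p) {d : ℕ} (hd : 3 * p / (p - 1) < d) :
    2 + d / p < (d - 1 : ℕ) := by
  have hp₀ : 0 < p - 1 := sub_pos.2 hp
  rw [div_lt_iff₀ hp₀] at hd
  have hd₁ : 1 ≤ d := Nat.one_le_iff_ne_zero.2 <| by
    rintro rfl
    rw [Nat.cast_zero, zero_mul] at hd
    linarith
  rw [Nat.cast_sub hd₁, Nat.cast_one, ← lt_sub_iff_add_lt', div_lt_iff₀ (by linarith)]
  linarith

theorem hard_instance_general (p : ℝ) (hp : 1 < p) (d : ℕ) (hd : 3 * p / (p - 1) < d) (ε : ℝ)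
    (hε : 0 < ε) :
    ∃ K : ℕ → Set (EuclideanSpace ℝ (Fin d)),
      (∀ i, IsCompact (K i) ∧ Convex ℝ (K i) ∧ (K i).Nonempty ∧ K i = -K i ∧
        K i ⊆ Metric.closedBall 0 1) ∧
      (∀ i, K (i + 1) ⊆ K i) ∧
      (∀ i, Metric.hausdorffDist (Metric.closedBall (0 : EuclideanSpace ℝ (Fin d)) 1) (K i) ≤ ε) ∧
      ¬ Summable (fun i => Dp p (K i) (K (i + 1))) ∧
      Antitone (fun i => Dp p (K i) (K (i + 1))) := by
  have hp₀ : 0 < p := one_pos.trans hp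
  have hexp := two_add_div_lt_sub_one hp hd
  have : NeZero d := ⟨by rintro rfl; norm_num at hexp⟩
  set δ : ℝ := min ε (1 / 2 ^ (2 * d + 1))
  have hδ₀ : 0 < δ := by positivity
  have hδ₁ : δ ≤ 1 / 2 ^ 1 := (min_le_right _ _).trans (by gcongr <;> norm_num)
  obtain ⟨r, hr₀, hrδ, hanti, hsum, hlt, hnot⟩ :=
    exists_antitone_summable_pow_not_summable_rpow (by positivity) hexp hδ₀
  have hr₁ (i : ℕ) : 2 * r i ≤ 1 := by linarith [hrδ i]
  obtain ⟨v, hv, hdisj⟩ :=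
    exists_pairwise_disjoint_doubleCap hr₀ hr₁ hanti hsum (hlt.trans_le (min_le_right _ _))
  have htδ (i : ℕ) : 1 - δ ≤ 1 - r i ^ 2 / 2 := by nlinarith only [hr₀ i, hr₁ i, hrδ i]
  have ht (i : ℕ) : 0 ≤ 1 - r i ^ 2 / 2 := by linarith [htδ i]
  have hmono : Monotone fun i => 1 - r i ^ 2 / 2 := fun i j hij => by
    dsimp only
    linarith [pow_le_pow_left₀ (hr₀ j).le (hanti hij) 2]
  exact ⟨truncatedBall v fun i => 1 - r i ^ 2 / 2,
    fun i => ⟨isCompact_truncatedBall _ _ i, convex_truncatedBall _ _ i,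
      truncatedBall_nonempty ht i, (neg_truncatedBall _ _ i).symm,
      truncatedBall_subset_closedBall _ _ i⟩,
    truncatedBall_succ_subset _ _,
    fun i => (hausdorffDist_truncatedBall_le hv hδ₀.le (by linarith) htδ i).trans (min_le_left _ _),
    not_summable_Dp_truncatedBall hp₀ hv hr₀ (fun i => by linarith [hr₀ i, hr₁ i]) hdisj hnot,
    antitone_Dp_truncatedBall hp₀ hv ht hmono hdisj⟩

/-- For `p > 1`, `d ≥ (4p-1)/(p-1)` and `ε > 0`, there is a nested sequence
`B ⊇ K₁ ⊇ K₂ ⊇ ⋯` of centrally symmetric compact convex sets with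
(I) `D_∞(B, Kᵢ) ≤ ε`, (II) `Σᵢ D_p(Kᵢ, Kᵢ₊₁) = ∞`, and (III) `D_p(Kᵢ, Kᵢ₊₁)`
nonincreasing in `i`. -/
theorem hard_instance (p : ℝ) (hp : 1 < p) (d : ℕ)
    (hd : ((4 * p - 1) / (p - 1) : ℝ) ≤ d) (ε : ℝ) (hε : 0 < ε) :
    ∃ K : ℕ → Set (EuclideanSpace ℝ (Fin d)),
      (∀ i, IsCompact (K i) ∧ Convex ℝ (K i) ∧ (K i).Nonempty ∧ K i = -K i ∧
        K i ⊆ Metric.closedBall 0 1) ∧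
      (∀ i, K (i + 1) ⊆ K i) ∧
      (∀ i, Metric.hausdorffDist (Metric.closedBall (0 : EuclideanSpace ℝ (Fin d)) 1) (K i) ≤ ε) ∧
      ¬ Summable (fun i => Dp p (K i) (K (i + 1))) ∧
      Antitone (fun i => Dp p (K i) (K (i + 1))) := by
  have hlt : 3 * p / (p - 1) < (4 * p - 1) / (p - 1) :=
    div_lt_div_of_pos_right (by linarith) (sub_pos.2 hp)
  exact hard_instance_general p hp d (hlt.trans_le hd) ε hε
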